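/- Let q ∈ ℋ_c, let q(±∞) be its limits at ±∞, let f(x) = ψ(x)^{-1}∫_{−∞}^{x}(q(y) − Φ(q))ψ(y)dy, f¹(x) = ψ(x)^{-1}∫_{−∞}^{x}(y·q(y) − Φ(v·q(v)))ψ(y)dy, and define (f¹)'(x) = x·f¹(x) + x·q(x) − Φ(v·q(v)). Then for all x ∈ ℝ: (a) |x·f(x)| ≤ max{q(−∞) − Φ(q), Φ(q) − q(+∞)} ≤ 1; (b) |f¹(x)| ≤ max{q(−∞), q(+∞)} ≤ 1; (c) |(f¹)'(x)| ≤ |x| + 1/√(2π). -/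

import Mathlib

open MeasureTheory Filter

/-- Density of the standard normal distribution. -/
noncomputable def gaussD (x : ℝ) : ℝ := (Real.sqrt (2 * Real.pi))⁻¹ * Real.exp (-(x ^ 2) / 2)

/-- Expectation of `g` with respect to the standard normal distribution, `Φ(g)`. -/
noncomputable def PhiInt (g : ℝ → ℝ) : ℝ := ∫ x, g x * gaussD x

/-- The class `ℋ` of monotonically decreasing, left-continuous functions `ℝ → [0,1]`. -/
def memH (h : ℝ → ℝ) : Prop :=
  (∀ x, h x ∈ Set.Icc (0 : ℝ) 1) ∧ Antitone h ∧
    ∀ x, ContinuousWithinAt h (Set.Iic x) x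

/-- The class `ℋ_c` of members of `ℋ` that are continuous outside some compact interval. -/
def memHc (h : ℝ → ℝ) : Prop :=
  memH h ∧ ∃ K : ℝ, ContinuousOn h (Set.Icc (-K) K)ᶜ

/-- The Stein solution `f` for the function `q`. -/
noncomputable def steinF0 (q : ℝ → ℝ) (x : ℝ) : ℝ :=
  (gaussD x)⁻¹ * ∫ y in Set.Iic x, (q y - PhiInt q) * gaussD y

/-- The Stein solution `f¹` for the function `x·q(x)`. -/
noncomputable def steinF1 (q : ℝ → ℝ) (x : ℝ) : ℝ :=
  (gaussD x)⁻¹ * ∫ y in Set.Iic x, (y * q y - PhiInt (fun v => v * q v)) * gaussD y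

/-- `(f¹)'`, defined through Stein's equation. -/
noncomputable def steinF1' (q : ℝ → ℝ) (x : ℝ) : ℝ :=
  x * steinF1 q x + x * q x - PhiInt (fun v => v * q v)

lemma gD_pos (x : ℝ) : 0 < gaussD x := by
  unfold gaussD; positivity

lemma gD_eq (x : ℝ) : gaussD x = (Real.sqrt (2 * Real.pi))⁻¹ * Real.exp (-(1/2 : ℝ) * x ^ 2) := by
  unfold gaussD; congr 2; ring

lemma gD_int : Integrable gaussD := by
  have h := (integrable_exp_neg_mul_sq (b := 1/2) (by norm_num)).const_mul
    (Real.sqrt (2 * Real.pi))⁻¹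
  exact h.congr (Eventually.of_forall fun x => (gD_eq x).symm)

lemma gD_xint : Integrable (fun x => x * gaussD x) := by
  have h := (integrable_mul_exp_neg_mul_sq (b := 1/2) (by norm_num)).const_mul
    (Real.sqrt (2 * Real.pi))⁻¹
  refine h.congr (Eventually.of_forall fun x => ?_)
  simp only [gD_eq]; ring

lemma gD_one : ∫ x, gaussD x = 1 := by
  simp_rw [gD_eq]
  rw [integral_const_mul, integral_gaussian]
  rw [show Real.pi / (1/2) = 2 * Real.pi by ring]
  have : 0 < Real.sqrt (2 * Real.pi) := by positivity
  field_simp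

lemma gD_deriv' (x : ℝ) : HasDerivAt gaussD (-(x * gaussD x)) x := by
  have h : HasDerivAt (fun x : ℝ => -(x ^ 2) / 2) (-x) x := by
    have h2 : HasDerivAt (fun x : ℝ => x ^ 2) (2 * x) x := by simpa using hasDerivAt_pow 2 x
    have := (h2.fun_neg).div_const 2
    have e : -(2 * x) / 2 = -x := by ring
    rwa [e] at this
  have h3 := (h.exp).const_mul (Real.sqrt (2 * Real.pi))⁻¹
  have e : (Real.sqrt (2 * Real.pi))⁻¹ * (Real.exp (-(x ^ 2) / 2) * -x) = -(x * gaussD x) := by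
    unfold gaussD; ring
  rw [e] at h3
  exact h3

lemma gD_deriv (x : ℝ) : HasDerivAt (fun x => - gaussD x) (x * gaussD x) x := by
  simpa using (gD_deriv' x).fun_neg

lemma gD_cont : Continuous gaussD := by
  unfold gaussD; fun_prop

lemma gD_top : Tendsto gaussD atTop (nhds 0) :=
  tendsto_zero_of_hasDerivAt_of_integrableOn_Ioi (a := 0) (fun x _ => gD_deriv' x)
    gD_xint.neg.integrableOn gD_int.integrableOn

lemma gD_bot : Tendsto gaussD atBot (nhds 0) :=
  tendsto_zero_of_hasDerivAt_of_integrableOn_Iic (a := 0) (fun x _ => gD_deriv' x)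
    gD_xint.neg.integrableOn gD_int.integrableOn

lemma gD_Iic (x : ℝ) : ∫ y in Set.Iic x, y * gaussD y = - gaussD x := by
  have := integral_Iic_of_hasDerivAt_of_tendsto' (a := x) (m := -0) (fun y _ => gD_deriv y)
    gD_xint.integrableOn gD_bot.neg
  simpa using this

lemma gD_Ioi (x : ℝ) : ∫ y in Set.Ioi x, y * gaussD y = gaussD x := by
  have := integral_Ioi_of_hasDerivAt_of_tendsto' (a := x) (m := -0) (fun y _ => gD_deriv y)
    gD_xint.integrableOn gD_top.neg
  simpa using this

lemma split_int {f : ℝ → ℝ} (hf : Integrable f) (x : ℝ) :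
    (∫ y in Set.Iic x, f y) + ∫ y in Set.Ioi x, f y = ∫ y, f y :=
  intervalIntegral.integral_Iic_add_Ioi hf.integrableOn hf.integrableOn

lemma gD_Ioc (a b : ℝ) (h : a ≤ b) : ∫ y in Set.Ioc a b, y * gaussD y = gaussD a - gaussD b := by
  have := setIntegral_union (μ := volume) (Set.Ioc_disjoint_Ioi (le_refl b) : Disjoint (Set.Ioc a b) (Set.Ioi b))
    measurableSet_Ioi (gD_xint.integrableOn) (gD_xint.integrableOn)
  rw [Set.Ioc_union_Ioi_eq_Ioi h, gD_Ioi, gD_Ioi] at this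
  linarith

lemma gD_sum (x : ℝ) : (∫ y in Set.Iic x, gaussD y) + ∫ y in Set.Ioi x, gaussD y = 1 := by
  rw [split_int gD_int, gD_one]

lemma gD_mul_le {x y : ℝ} (h : 0 ≤ x * (y - x)) :
    gaussD y * gaussD 0 ≤ gaussD x * gaussD (y - x) := by
  unfold gaussD
  have : Real.exp (-(y ^ 2) / 2) * Real.exp (-(0 ^ 2) / 2) ≤
      Real.exp (-(x ^ 2) / 2) * Real.exp (-((y-x) ^ 2) / 2) := by
    rw [← Real.exp_add, ← Real.exp_add]
    apply Real.exp_le_exp.2; nlinarith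
  have h2 : 0 ≤ (Real.sqrt (2 * Real.pi))⁻¹ * (Real.sqrt (2 * Real.pi))⁻¹ := by positivity
  have := mul_le_mul_of_nonneg_left this h2
  linarith

lemma gD_mills_aux (s : Set ℝ) (hs : MeasurableSet s) (x : ℝ) (h : ∀ y ∈ s, 0 ≤ x * (y - x)) :
    (∫ y in s, gaussD y) * gaussD 0 ≤ gaussD x := by
  have hi : Integrable (fun y => gaussD x * gaussD (y - x)) :=
    (gD_int.comp_sub_right x).const_mul _
  calc (∫ y in s, gaussD y) * gaussD 0 = ∫ y in s, gaussD y * gaussD 0 := by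
        rw [integral_mul_const]
    _ ≤ ∫ y in s, gaussD x * gaussD (y - x) :=
        setIntegral_mono_on (gD_int.mul_const _).integrableOn hi.integrableOn hs
          (fun y hy => gD_mul_le (h y hy))
    _ ≤ ∫ y, gaussD x * gaussD (y - x) :=
        setIntegral_le_integral hi (Eventually.of_forall fun y => (mul_pos (gD_pos _) (gD_pos _)).le)
    _ = gaussD x := by
        rw [integral_const_mul, integral_sub_right_eq_self gaussD x, gD_one, mul_one]

lemma mono_c {f : ℝ → ℝ} {g : ℝ → ℝ} (hf : Integrable f) (hg : Integrable g) (s : Set ℝ)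
    (hs : MeasurableSet s) (h : ∀ y ∈ s, f y ≤ g y) : ∫ y in s, f y ≤ ∫ y in s, g y :=
  setIntegral_mono_on hf.integrableOn hg.integrableOn hs h

lemma gD_Iic_mul (a x : ℝ) : ∫ y in Set.Iic x, a * (y * gaussD y) = - (a * gaussD x) := by
  rw [integral_const_mul, gD_Iic]; ring

lemma gD_Ioi_mul (a x : ℝ) : ∫ y in Set.Ioi x, a * (y * gaussD y) = a * gaussD x := by
  rw [integral_const_mul, gD_Ioi]

lemma gD_Ioc_mul (a x z : ℝ) (h : x ≤ z) :
    ∫ y in Set.Ioc x z, a * (y * gaussD y) = a * (gaussD x - gaussD z) := by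
  rw [integral_const_mul, gD_Ioc _ _ h]

lemma mills_neg (x : ℝ) (hx : x ≤ 0) : (-x) * (∫ y in Set.Iic x, gaussD y) ≤ gaussD x := by
  rw [← integral_const_mul]
  have := mono_c (gD_int.const_mul (-x)) (gD_xint.const_mul (-1)) (Set.Iic x) measurableSet_Iic
    (fun y hy => by
      have := gD_pos y
      have hy : y ≤ x := hy
      nlinarith)
  rw [gD_Iic_mul] at this
  linarith

lemma mills_pos (x : ℝ) (hx : 0 ≤ x) : x * (∫ y in Set.Ioi x, gaussD y) ≤ gaussD x := by
  rw [← integral_const_mul]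
  have := mono_c (gD_int.const_mul x) (gD_xint.const_mul 1) (Set.Ioi x) measurableSet_Ioi
    (fun y hy => by
      have := gD_pos y
      have hy : x < y := hy
      nlinarith)
  rw [gD_Ioi_mul] at this
  linarith

lemma abs_int_le {h : ℝ → ℝ} (M : ℝ) (hi : Integrable (fun y => h y * gaussD y))
    (hM : ∀ y, |h y| ≤ M) (s : Set ℝ) :
    |∫ y in s, h y * gaussD y| ≤ M * ∫ y in s, gaussD y := by
  have := norm_integral_le_of_norm_le (μ := volume.restrict s) (f := fun y => h y * gaussD y)
    (gD_int.const_mul M).integrableOn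
    (Eventually.of_forall fun y => by
      rw [Real.norm_eq_abs, abs_mul, abs_of_pos (gD_pos y)]
      exact mul_le_mul_of_nonneg_right (hM y) (gD_pos y).le)
  rw [integral_const_mul] at this
  simpa using this

/-- bounds on `x·f(x)`, `f¹(x)` and `(f¹)'(x)` for `q ∈ ℋ_c`. -/
theorem stein_solution_bounds (q : ℝ → ℝ) (hq : memHc q) (qp qm : ℝ)
    (hqp : Tendsto q atTop (nhds qp)) (hqm : Tendsto q atBot (nhds qm)) :
    (∀ x : ℝ, |x * steinF0 q x| ≤ max (qm - PhiInt q) (PhiInt q - qp)) ∧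
    max (qm - PhiInt q) (PhiInt q - qp) ≤ 1 ∧
    (∀ x : ℝ, |steinF1 q x| ≤ max qm qp) ∧
    max qm qp ≤ 1 ∧
    (∀ x : ℝ, |steinF1' q x| ≤ |x| + 1 / Real.sqrt (2 * Real.pi)) := by
  obtain ⟨⟨h01, hanti, -⟩, -⟩ := hq
  have hmeas : Measurable q := hanti.measurable
  have h0 : ∀ y, 0 ≤ q y := fun y => (h01 y).1
  have h1 : ∀ y, q y ≤ 1 := fun y => (h01 y).2
  have hqm_ge : ∀ y, q y ≤ qm := fun y => Antitone.ge_of_tendsto hanti hqm y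
  have hqp_le : ∀ y, qp ≤ q y := fun y => Antitone.le_of_tendsto hanti hqp y
  have hqm1 : qm ≤ 1 := le_of_tendsto' hqm h1
  have hqp0 : 0 ≤ qp := ge_of_tendsto' hqp h0
  have hmax : max qm qp = qm := max_eq_left ((hqp_le 0).trans (hqm_ge 0))
  have hqi : Integrable (fun y => q y * gaussD y) :=
    gD_int.bdd_mul (c := 1) hmeas.aestronglyMeasurable
      (Eventually.of_forall fun y => by rw [Real.norm_eq_abs, abs_of_nonneg (h0 y)]; exact h1 y)
  have hyi : Integrable (fun y => y * q y * gaussD y) := by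
    have : Integrable (fun y => q y * (y * gaussD y)) :=
      gD_xint.bdd_mul (c := 1) hmeas.aestronglyMeasurable
        (Eventually.of_forall fun y => by rw [Real.norm_eq_abs, abs_of_nonneg (h0 y)]; exact h1 y)
    exact this.congr (Eventually.of_forall fun y => by simp only []; ring)
  have hPle : PhiInt q ≤ qm := by
    have := integral_mono hqi (gD_int.const_mul qm)
      (fun y => mul_le_mul_of_nonneg_right (hqm_ge y) (gD_pos y).le)
    rwa [integral_const_mul, gD_one, mul_one] at this
  have hPge : qp ≤ PhiInt q := by
    have := integral_mono (gD_int.const_mul qp) hqi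
      (fun y => mul_le_mul_of_nonneg_right (hqp_le y) (gD_pos y).le)
    rwa [integral_const_mul, gD_one, mul_one] at this
  have hpt0 : ∀ y, y * q y * gaussD y ≤ q 0 * (y * gaussD y) := fun y => by
    have hg := gD_pos y
    have : y * (q y - q 0) ≤ 0 := by
      rcases le_total y 0 with h | h
      · exact mul_nonpos_of_nonpos_of_nonneg h (sub_nonneg.2 (hanti h))
      · exact mul_nonpos_of_nonneg_of_nonpos h (sub_nonpos.2 (hanti h))
    nlinarith
  have hLu : ∀ x, ∫ y in Set.Iic x, y * q y * gaussD y ≤ -(q 0 * gaussD x) := fun x => by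
    rw [← gD_Iic_mul]
    exact mono_c hyi (gD_xint.const_mul _) _ measurableSet_Iic fun y _ => hpt0 y
  have hRu : ∀ x, ∫ y in Set.Ioi x, y * q y * gaussD y ≤ q 0 * gaussD x := fun x => by
    rw [← gD_Ioi_mul]
    exact mono_c hyi (gD_xint.const_mul _) _ measurableSet_Ioi fun y _ => hpt0 y
  -- pointwise comparison lemmas
  have ptle : ∀ y a, y * q y ≤ y * a → y * q y * gaussD y ≤ a * (y * gaussD y) := fun y a h => by
    have := mul_le_mul_of_nonneg_right h (gD_pos y).le
    linarith
  have ptge : ∀ y a, y * a ≤ y * q y → a * (y * gaussD y) ≤ y * q y * gaussD y := fun y a h => by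
    have := mul_le_mul_of_nonneg_right h (gD_pos y).le
    linarith
  have hRn : ∀ x, 0 ≤ x → 0 ≤ ∫ y in Set.Ioi x, y * q y * gaussD y := fun x hx =>
    setIntegral_nonneg measurableSet_Ioi fun y hy =>
      mul_nonneg (mul_nonneg (hx.trans (le_of_lt hy)) (h0 y)) (gD_pos y).le
  have hRa : ∀ x, 0 ≤ x → ∫ y in Set.Ioi x, y * q y * gaussD y ≤ q x * gaussD x := fun x hx => by
    rw [← gD_Ioi_mul]
    exact mono_c hyi (gD_xint.const_mul _) _ measurableSet_Ioi fun y hy =>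
      ptle y _ (mul_le_mul_of_nonneg_left (hanti (le_of_lt hy)) (hx.trans (le_of_lt hy)))
  have hLm : ∀ x, x ≤ 0 → -(qm * gaussD x) ≤ ∫ y in Set.Iic x, y * q y * gaussD y := fun x hx => by
    rw [← gD_Iic_mul]
    exact mono_c (gD_xint.const_mul _) hyi _ measurableSet_Iic fun y hy =>
      ptge y _ (mul_le_mul_of_nonpos_left (hqm_ge y) (le_trans hy hx))
  have hLa : ∀ x, x ≤ 0 → ∫ y in Set.Iic x, y * q y * gaussD y ≤ -(q x * gaussD x) := fun x hx => by
    rw [← gD_Iic_mul]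
    exact mono_c hyi (gD_xint.const_mul _) _ measurableSet_Iic fun y hy =>
      ptle y _ (mul_le_mul_of_nonpos_left (hanti hy) (le_trans hy hx))
  have hLp : ∀ x, 0 ≤ x → -(qm * gaussD 0) + q x * (gaussD 0 - gaussD x) ≤
      ∫ y in Set.Iic x, y * q y * gaussD y := fun x hx => by
    have hs := setIntegral_union (μ := volume) (Set.Iic_disjoint_Ioc (le_refl (0:ℝ)) :
      Disjoint (Set.Iic 0) (Set.Ioc 0 x)) measurableSet_Ioc hyi.integrableOn hyi.integrableOn
    rw [Set.Iic_union_Ioc_eq_Iic hx] at hs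
    rw [hs, ← gD_Ioc_mul _ _ _ hx]
    refine add_le_add (hLm 0 le_rfl) ?_
    exact mono_c (gD_xint.const_mul _) hyi _ measurableSet_Ioc fun y hy =>
      ptge y _ (mul_le_mul_of_nonneg_left (hanti hy.2) hy.1.le)
  have hRl : ∀ x, x ≤ 0 → q x * (gaussD x - gaussD 0) ≤
      ∫ y in Set.Ioi x, y * q y * gaussD y := fun x hx => by
    have hs := setIntegral_union (μ := volume) (Set.Ioc_disjoint_Ioi (le_refl (0:ℝ)) :
      Disjoint (Set.Ioc x 0) (Set.Ioi 0)) measurableSet_Ioi hyi.integrableOn hyi.integrableOn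
    rw [Set.Ioc_union_Ioi_eq_Ioi hx] at hs
    rw [hs, ← gD_Ioc_mul _ _ _ hx]
    refine le_add_of_le_of_nonneg ?_ (hRn 0 le_rfl)
    exact mono_c (gD_xint.const_mul _) hyi _ measurableSet_Ioc fun y hy =>
      ptge y _ (mul_le_mul_of_nonpos_left (hanti hy.1.le) hy.2)
  have hcs : ∀ x, (∫ y in Set.Iic x, y * q y * gaussD y) + ∫ y in Set.Ioi x, y * q y * gaussD y
      = PhiInt (fun v => v * q v) := fun x => split_int hyi x
  have hF1 : ∀ x, -qm ≤ steinF1 q x ∧ steinF1 q x ≤ 0 := by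
    intro x
    have hg := gD_pos x
    have hPQ := gD_sum x
    have hP : 0 ≤ ∫ y in Set.Iic x, gaussD y := integral_nonneg fun y => (gD_pos y).le
    have hQ : 0 ≤ ∫ y in Set.Ioi x, gaussD y := integral_nonneg fun y => (gD_pos y).le
    have hS : ∫ y in Set.Iic x, (y * q y - PhiInt (fun v => v * q v)) * gaussD y
        = (∫ y in Set.Iic x, y * q y * gaussD y)
          - PhiInt (fun v => v * q v) * ∫ y in Set.Iic x, gaussD y := by
      simp_rw [sub_mul]
      rw [integral_sub hyi.integrableOn (gD_int.const_mul _).integrableOn, integral_const_mul]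
    unfold steinF1
    rw [hS, ← hcs x]
    have key : -qm * gaussD x ≤ (∫ y in Set.Iic x, y * q y * gaussD y)
          - ((∫ y in Set.Iic x, y * q y * gaussD y) + ∫ y in Set.Ioi x, y * q y * gaussD y)
            * (∫ y in Set.Iic x, gaussD y) ∧
        (∫ y in Set.Iic x, y * q y * gaussD y)
          - ((∫ y in Set.Iic x, y * q y * gaussD y) + ∫ y in Set.Ioi x, y * q y * gaussD y)
            * (∫ y in Set.Iic x, gaussD y) ≤ 0 := by
      have hLux := hLu x
      have hRux := hRu x
      have hRnx := hRn x
      have hRax := hRa x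
      have hLmx := hLm x
      have hLax := hLa x
      have hLpx := hLp x
      have hRlx := hRl x
      have m1 := gD_mills_aux (Set.Iic x) measurableSet_Iic x
      have m2 := gD_mills_aux (Set.Ioi x) measurableSet_Ioi x
      generalize (∫ y in Set.Iic x, y * q y * gaussD y) = L at *
      generalize (∫ y in Set.Ioi x, y * q y * gaussD y) = R at *
      generalize (∫ y in Set.Iic x, gaussD y) = P at *
      generalize (∫ y in Set.Ioi x, gaussD y) = Q at *
      have e : L - (L + R) * P = Q * L - P * R := by
        have : Q = 1 - P := by linarith
        rw [this]; ring
      rw [e]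
      have a0 := h0 x
      have am := hqm_ge x
      have b0 := h0 0
      have bm := hqm_ge 0
      have hQe : Q = 1 - P := by linarith
      rcases le_total 0 x with hx | hx
      · have m := m2 (fun y hy => mul_nonneg hx (sub_nonneg.2 (le_of_lt hy)))
        constructor
        · have t1 := mul_le_mul_of_nonneg_left (hLpx hx) hQ
          have t2 := mul_le_mul_of_nonneg_left (hRax hx) hP
          have t3 := mul_le_mul_of_nonneg_left m (sub_nonneg.2 am)
          subst hQe
          nlinarith
        · have t1 := mul_nonneg hP (hRnx hx)
          have t2 := mul_nonneg b0 hg.le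
          have t3 : Q * L ≤ 0 := mul_nonpos_of_nonneg_of_nonpos hQ (by linarith)
          linarith
      · have m := m1 (fun y hy => mul_nonneg_of_nonpos_of_nonpos hx (sub_nonpos.2 hy))
        constructor
        · have t1 := mul_le_mul_of_nonneg_left (hLmx hx) hQ
          have t2 := mul_le_mul_of_nonneg_left hRux hP
          have t3 := mul_le_mul_of_nonneg_left (mul_le_mul_of_nonneg_right bm hg.le) hP
          subst hQe
          nlinarith
        · have t1 := mul_le_mul_of_nonneg_left (hLax hx) hQ
          have t2 := mul_le_mul_of_nonneg_left (hRlx hx) hP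
          have t3 := mul_le_mul_of_nonneg_left m a0
          subst hQe
          nlinarith
    rw [← div_eq_inv_mul]
    exact ⟨(le_div_iff₀ hg).2 key.1, div_nonpos_of_nonpos_of_nonneg key.2 hg.le⟩
  have hc : -gaussD 0 ≤ PhiInt (fun v => v * q v) ∧ PhiInt (fun v => v * q v) ≤ 0 := by
    have := hcs 0
    have := hLu 0
    have := hRu 0
    have := hRn 0 le_rfl
    have := hLm 0 le_rfl
    have := mul_le_mul_of_nonneg_right hqm1 (gD_pos 0).le
    constructor <;> linarith
  refine ⟨?_, ?_, ?_, ?_, ?_⟩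
  · intro x
    set M := max (qm - PhiInt q) (PhiInt q - qp) with hM
    have hg := gD_pos x
    have hMb : ∀ y, |q y - PhiInt q| ≤ M := fun y => by
      rw [abs_le]
      have := le_max_left (qm - PhiInt q) (PhiInt q - qp)
      have := le_max_right (qm - PhiInt q) (PhiInt q - qp)
      have := hqm_ge y
      have := hqp_le y
      constructor <;> linarith
    have hM0 : 0 ≤ M := (abs_nonneg _).trans (hMb 0)
    have hi : Integrable (fun y => (q y - PhiInt q) * gaussD y) := by
      simp_rw [sub_mul]
      exact hqi.sub (gD_int.const_mul _)
    have htot : ∫ y, (q y - PhiInt q) * gaussD y = 0 := by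
      simp_rw [sub_mul]
      rw [integral_sub hqi (gD_int.const_mul _), integral_const_mul, gD_one]
      simp [PhiInt]
    have hsp := split_int hi x
    rw [htot] at hsp
    unfold steinF0
    rw [← div_eq_inv_mul, ← mul_div_assoc, abs_div, abs_of_pos hg, div_le_iff₀ hg, abs_mul]
    rcases le_total 0 x with hx | hx
    · have h := abs_int_le M hi hMb (Set.Ioi x)
      rw [eq_neg_of_add_eq_zero_left hsp, abs_neg, abs_of_nonneg hx]
      have h2 := mul_le_mul_of_nonneg_left h hx
      have h3 := mul_le_mul_of_nonneg_left (mills_pos x hx) hM0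
      linarith
    · have h := abs_int_le M hi hMb (Set.Iic x)
      rw [abs_of_nonpos hx]
      have h2 := mul_le_mul_of_nonneg_left h (neg_nonneg.2 hx)
      have h3 := mul_le_mul_of_nonneg_left (mills_neg x hx) hM0
      linarith
  · exact max_le (by linarith) (by linarith)
  · intro x
    rw [hmax, abs_le]
    have := hF1 x
    have := hqm_ge 0
    have := h0 0
    constructor <;> linarith
  · rw [hmax]; exact hqm1
  · intro x
    have hg0 : gaussD 0 = 1 / Real.sqrt (2 * Real.pi) := by simp [gaussD]
    rw [← hg0]
    unfold steinF1'
    have e : x * steinF1 q x + x * q x - PhiInt (fun v => v * q v)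
      = x * (steinF1 q x + q x) + - PhiInt (fun v => v * q v) := by ring
    rw [e]
    refine (abs_add_le _ _).trans (add_le_add ?_ ?_)
    · rw [abs_mul]
      refine mul_le_of_le_one_right (abs_nonneg _) ?_
      have := hF1 x
      have := h0 x
      have := h1 x
      rw [abs_le]; constructor <;> linarith
    · rw [abs_le]; constructor <;> linarith [gD_pos 0]
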